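/- (Type covering lemma) For any distortion measure d on X × Y with ∀x ∃y d(x,y)=0, any δ > 0, there exists n₀ such that for all n ≥ n₀, every type Q of length-n sequences over X, and every D ≥ 0, there exists a set B ⊆ Y^n with (1/n) log|B| ≤ R(D,Q) + δ and such that every x^n in the type class T_Q^n satisfies min_{y^n ∈ B} d^(n)(x^n, y^n) ≤ D. -/

import Mathlib

open scoped BigOperators

/-- A probability distribution on a finite alphabet. -/
def IsProbDist {X : Type*} [Fintype X] (p : X → ℝ) : Prop :=
  (∀ x, 0 ≤ p x) ∧ ∑ x, p x = 1

/-- Relative entropy (KL divergence), natural log, convention 0 log 0 = 0. -/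
noncomputable def klDiv {X : Type*} [Fintype X] (Q P : X → ℝ) : ℝ :=
  ∑ x, Q x * Real.log (Q x / P x)

/-- Mutual information of the joint law Q(x)W(y|x). -/
noncomputable def mutualInfo {X Y : Type*} [Fintype X] [Fintype Y]
    (Q : X → ℝ) (W : X → Y → ℝ) : ℝ :=
  ∑ x, ∑ y, Q x * W x y * Real.log (W x y / (∑ x', Q x' * W x' y))

/-- Rate-distortion function `R(D,Q)`. -/
noncomputable def rateDistortion {X Y : Type*} [Fintype X] [Fintype Y]
    (d : X → Y → ℝ) (D : ℝ) (Q : X → ℝ) : ℝ :=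
  sInf {r | ∃ W : X → Y → ℝ, (∀ x y, 0 ≤ W x y) ∧ (∀ x, ∑ y, W x y = 1) ∧
    (∑ x, ∑ y, Q x * W x y * d x y) ≤ D ∧ r = mutualInfo Q W}

/-- Per-symbol mean distortion between two length-n sequences. -/
noncomputable def meanDist {X Y : Type*} (d : X → Y → ℝ) {n : ℕ}
    (x : Fin n → X) (y : Fin n → Y) : ℝ :=
  (1 / (n : ℝ)) * ∑ i, d (x i) (y i)

/-- Empirical distribution (type) of a sequence. -/
noncomputable def empDist {X : Type*} [Fintype X] [DecidableEq X] {n : ℕ}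
    (x : Fin n → X) (a : X) : ℝ :=
  ((Finset.univ.filter (fun i => x i = a)).card : ℝ) / n

/-- Counting function of an adversarial strategy list: 1-based index of the
first guess within mean distortion `D` of `x` (0 if none exists). -/
noncomputable def countG {X Y : Type*} (d : X → Y → ℝ) (D : ℝ) {n : ℕ}
    (S : List (Fin n → Y)) (x : Fin n → X) : ℕ :=
  sInf {j : ℕ | ∃ y ∈ S.take j, meanDist d x y ≤ D}

/-- n-fold product (i.i.d.) distribution. -/
noncomputable def prodDist {X : Type*} (P : X → ℝ) {n : ℕ} (x : Fin n → X) : ℝ :=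
  ∏ i, P (x i)

/-!
Type classes are the orbits of the permutation group acting on the coordinates of sequences. Let
`F` be a joint sequence with marginals `f`, `g` of types `Q`, `P`. By homogeneity every `x` in the
orbit of `f` is related to the same fraction `|orbit F| / (|orbit f| * |orbit g|)` of the orbit of
`g`, the relation being "`(x, y)` has the same joint type as `F`". Choosing codewords greedily,
about `log |orbit f|` times the inverse of this fraction suffice to cover the whole orbit of `f`.
By Stirling's formula the logarithm of a type class is `n` times the entropy of the type up to
`O(log n)`, so the rate of the code is the mutual information of the joint type of `F`. It remains
to approximate the joint law of a nearly optimal channel by such a joint type: rounding errors are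
moved to a letter of least distortion, and the mutual information is uniformly continuous on the
simplex.
-/

section GreedyCovering

open Finset Real

variable {α β : Type*} {r : α → β → Prop} [∀ a b, Decidable (r a b)] {T : Finset β} {p : ℝ}

theorem exists_mem_card_filter_not_le (hT : T.Nonempty) (U : Finset α)
    (hp : ∀ a ∈ U, p * #T ≤ #{b ∈ T | r a b}) :
    ∃ b ∈ T, (#{a ∈ U | ¬ r a b} : ℝ) ≤ (1 - p) * #U := by
  have double_count : ∑ _b ∈ T, p * #U ≤ ∑ b ∈ T, (#{a ∈ U | r a b} : ℝ) :=
    calc ∑ _b ∈ T, p * #U = ∑ _a ∈ U, p * #T := by simp only [sum_const, nsmul_eq_mul]; ring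
      _ ≤ ∑ a ∈ U, (#{b ∈ T | r a b} : ℝ) := sum_le_sum hp
      _ = ∑ b ∈ T, (#{a ∈ U | r a b} : ℝ) :=
        mod_cast sum_card_bipartiteAbove_eq_sum_card_bipartiteBelow r
  obtain ⟨b, hbT, hb⟩ := exists_le_of_sum_le hT double_count
  have split : (#{a ∈ U | r a b} + #{a ∈ U | ¬ r a b} : ℝ) = #U :=
    mod_cast card_filter_add_card_filter_not (s := U) (r · b)
  exact ⟨b, hbT, by linarith⟩

theorem exists_subset_card_uncovered_le (hT : T.Nonempty) {S : Finset α} (hp1 : p ≤ 1)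
    (hp : ∀ a ∈ S, p * #T ≤ #{b ∈ T | r a b}) (M : ℕ) :
    ∃ C ⊆ T, #C ≤ M ∧ (#{a ∈ S | ∀ b ∈ C, ¬ r a b} : ℝ) ≤ (1 - p) ^ M * #S := by
  classical
  induction M with
  | zero => exact ⟨∅, by simp⟩
  | succ M ih =>
    obtain ⟨C, hCT, hC, hU⟩ := ih
    obtain ⟨b, hbT, hb⟩ := exists_mem_card_filter_not_le hT {a ∈ S | ∀ b ∈ C, ¬ r a b}
      fun a ha => hp a (mem_of_mem_filter a ha)
    refine ⟨insert b C, insert_subset hbT hCT, (card_insert_le _ _).trans (by lia), ?_⟩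
    calc (#{a ∈ S | ∀ c ∈ insert b C, ¬ r a c} : ℝ)
        = #{a ∈ {a ∈ S | ∀ c ∈ C, ¬ r a c} | ¬ r a b} := by
          simp only [forall_mem_insert, filter_filter, and_comm]
      _ ≤ (1 - p) * #{a ∈ S | ∀ c ∈ C, ¬ r a c} := hb
      _ ≤ (1 - p) * ((1 - p) ^ M * #S) := mul_le_mul_of_nonneg_left hU (sub_nonneg.2 hp1)
      _ = (1 - p) ^ (M + 1) * #S := by ring

theorem exists_subset_covering_card_le (hT : T.Nonempty) (S : Finset α) (hp0 : 0 < p)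
    (hp : ∀ a ∈ S, p * #T ≤ #{b ∈ T | r a b}) :
    ∃ C ⊆ T, (#C : ℝ) ≤ log #S / p + 1 ∧ ∀ a ∈ S, ∃ b ∈ C, r a b := by
  rcases S.eq_empty_or_nonempty with rfl | hS
  · exact ⟨∅, by simp⟩
  have hT0 : (0 : ℝ) < #T := mod_cast hT.card_pos
  have hS0 : (0 : ℝ) < #S := mod_cast hS.card_pos
  have hp1 : p ≤ 1 := by
    obtain ⟨a, ha⟩ := hS
    refine le_of_mul_le_mul_right ?_ hT0
    calc p * #T ≤ #{b ∈ T | r a b} := hp a ha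
      _ ≤ 1 * #T := by rw [one_mul]; exact mod_cast card_filter_le T _
  set M := ⌊log #S / p⌋₊ + 1 with hM
  have hM_le : (M : ℝ) ≤ log #S / p + 1 := by
    rw [hM, Nat.cast_add_one]
    gcongr
    exact Nat.floor_le (div_nonneg (log_natCast_nonneg _) hp0.le)
  have lt_pM : log #S < p * M := by
    rw [hM, Nat.cast_add_one, mul_comm, ← div_lt_iff₀ hp0]
    exact Nat.lt_floor_add_one _
  obtain ⟨C, hCT, hC, hU⟩ := exists_subset_card_uncovered_le hT hp1 hp M
  refine ⟨C, hCT, (Nat.cast_le.2 hC).trans hM_le, ?_⟩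
  have uncovered_lt_one : (#{a ∈ S | ∀ b ∈ C, ¬ r a b} : ℝ) < 1 :=
    calc (#{a ∈ S | ∀ b ∈ C, ¬ r a b} : ℝ) ≤ (1 - p) ^ M * #S := hU
      _ ≤ exp (-p) ^ M * #S := by
        gcongr
        exact one_sub_le_exp_neg p
      _ = exp (-(p * M)) * #S := by rw [← exp_nat_mul, mul_neg, mul_comm p]
      _ < exp (-log #S) * #S := by gcongr
      _ = 1 := by rw [exp_neg, exp_log hS0, inv_mul_cancel₀ hS0.ne']
  have none_uncovered := filter_eq_empty_iff.1
    (card_eq_zero.1 (Nat.lt_one_iff.1 (mod_cast uncovered_lt_one)))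
  simpa only [not_forall, exists_prop, not_not] using none_uncovered

end GreedyCovering

section OrbitCovering

open MulAction Real
open scoped Pointwise

variable {G A B : Type*} [Group G] [MulAction G A] [MulAction G B]

theorem ncard_orbit_pos [Finite A] (a : A) : 0 < (orbit G a).ncard :=
  (nonempty_orbit a).ncard_pos

theorem ncard_orbit_prod (a : A) (b : B) :
    (orbit G (a, b)).ncard = (orbit (stabilizer G a) b).ncard * (orbit G a).ncard := by
  have stabilizer_prod : stabilizer G (a, b) = stabilizer G a ⊓ stabilizer G b := by
    ext g
    simp
  have stabilizer_stabilizer :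
      stabilizer (stabilizer G a) b = (stabilizer G b).subgroupOf (stabilizer G a) := by
    ext g
    rfl
  rw [← index_stabilizer, ← index_stabilizer, ← index_stabilizer, stabilizer_prod,
    stabilizer_stabilizer, ← Subgroup.relIndex_mul_index inf_le_left, Subgroup.inf_relIndex_left,
    Subgroup.relIndex]

theorem ncard_orbit_prod_le [Finite A] [Finite B] (a : A) (b : B) :
    (orbit G (a, b)).ncard ≤ (orbit G a).ncard * (orbit G b).ncard := by
  rw [← Set.ncard_prod]
  refine Set.ncard_le_ncard ?_
  rintro _ ⟨g, rfl⟩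
  exact ⟨mem_orbit a g, mem_orbit b g⟩

theorem setOf_smul_mk_mem_orbit (g : G) (a : A) (b : B) :
    {b' | (g • a, b') ∈ orbit G (a, b)} = g • orbit (stabilizer G a) b := by
  ext b'
  rw [Set.mem_smul_set_iff_inv_smul_mem]
  constructor
  · rintro ⟨h, hh⟩
    obtain ⟨ha, rfl⟩ := Prod.mk.inj hh
    exact ⟨⟨g⁻¹ * h, by rw [mem_stabilizer_iff, mul_smul, inv_smul_eq_iff]; exact ha⟩,
      mul_smul _ _ _⟩
  · rintro ⟨⟨s, hs⟩, hsb⟩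
    refine ⟨g * s, Prod.ext ?_ ?_⟩
    · exact (mul_smul g s a).trans (congrArg (g • ·) hs)
    · exact (mul_smul g s b).trans (smul_eq_iff_eq_inv_smul g |>.2 hsb)

theorem exists_orbit_covering_card_le [Finite A] [Finite B] (a : A) (b : B) :
    ∃ C : Finset B,
      (C.card : ℝ) ≤ log (orbit G a).ncard *
        ((orbit G a).ncard * (orbit G b).ncard / (orbit G (a, b)).ncard) + 1 ∧
      ∀ a' ∈ orbit G a, ∃ b' ∈ C, (a', b') ∈ orbit G (a, b) := by
  classical
  have := Fintype.ofFinite A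
  have := Fintype.ofFinite B
  have ncard_pos_a : (0 : ℝ) < (orbit G a).ncard := mod_cast ncard_orbit_pos a
  have ncard_pos_b : (0 : ℝ) < (orbit G b).ncard := mod_cast ncard_orbit_pos b
  have ncard_pos_ab : (0 : ℝ) < (orbit G (a, b)).ncard := mod_cast ncard_orbit_pos (a, b)
  have card_fiber (a' : A) (ha' : a' ∈ orbit G a) :
      ((orbit G b).toFinset.filter fun b' => (a', b') ∈ orbit G (a, b)).card =
        (orbit (stabilizer G a) b).ncard := by
    obtain ⟨g, rfl⟩ := ha'
    rw [← Set.ncard_smul_set g, ← setOf_smul_mk_mem_orbit, ← Set.ncard_coe_finset]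
    congr 1
    ext b'
    simpa using snd_mem_orbit_of_mem_orbit
  obtain ⟨C, -, hC, hcov⟩ := exists_subset_covering_card_le
    (r := fun a' b' => (a', b') ∈ orbit G (a, b))
    (p := (orbit G (a, b)).ncard / ((orbit G a).ncard * (orbit G b).ncard))
    (Set.toFinset_nonempty.2 (nonempty_orbit b)) (orbit G a).toFinset (by positivity)
    fun a' ha' => by
      rw [card_fiber a' (Set.mem_toFinset.1 ha'), ← Set.ncard_eq_toFinset_card', ncard_orbit_prod]
      push_cast
      field_simp
      rfl
  refine ⟨C, ?_, fun a' ha' => hcov a' (Set.mem_toFinset.2 ha')⟩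
  rwa [← Set.ncard_eq_toFinset_card', div_eq_mul_inv, inv_div] at hC

theorem exists_orbit_covering_log_card_le [Finite A] [Finite B] (a : A) (b : B) :
    ∃ C : Finset B,
      log C.card ≤ log (log (orbit G a).ncard + 1) + (log (orbit G a).ncard +
        log (orbit G b).ncard - log (orbit G (a, b)).ncard) ∧
      ∀ a' ∈ orbit G a, ∃ b' ∈ C, (a', b') ∈ orbit G (a, b) := by
  have ncard_pos_a : (0 : ℝ) < (orbit G a).ncard := mod_cast ncard_orbit_pos a
  have ncard_pos_b : (0 : ℝ) < (orbit G b).ncard := mod_cast ncard_orbit_pos b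
  have ncard_pos_ab : (0 : ℝ) < (orbit G (a, b)).ncard := mod_cast ncard_orbit_pos (a, b)
  obtain ⟨C, hC, hcov⟩ := exists_orbit_covering_card_le (G := G) a b
  refine ⟨C, ?_, hcov⟩
  have one_le_ratio :
      (1 : ℝ) ≤ (orbit G a).ncard * (orbit G b).ncard / (orbit G (a, b)).ncard := by
    rw [one_le_div ncard_pos_ab]
    exact mod_cast ncard_orbit_prod_le a b
  obtain ⟨b₀, hb₀, -⟩ : ∃ b' ∈ C, (a, b') ∈ orbit G (a, b) := hcov a (mem_orbit_self a)
  have card_pos : (0 : ℝ) < C.card := mod_cast Finset.card_pos.2 ⟨b₀, hb₀⟩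
  calc log C.card
      ≤ log ((log (orbit G a).ncard + 1) *
          ((orbit G a).ncard * (orbit G b).ncard / (orbit G (a, b)).ncard)) :=
        log_le_log card_pos (by linarith)
    _ = _ := by
        rw [log_mul (by positivity) (by positivity), log_div (by positivity) (by positivity),
          log_mul (by positivity) (by positivity)]

end OrbitCovering

section LogFactorial

open Real
open scoped Nat

theorem mul_log_sub_self_le_log_factorial (k : ℕ) : k * log k - k ≤ log k ! := by
  rcases eq_or_ne k 0 with rfl | hk
  · simp
  have log_nonneg : 0 ≤ log k := log_natCast_nonneg k
  have log_two_pi_nonneg : 0 ≤ log (2 * π) := Real.log_nonneg (by linarith [pi_gt_three])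
  linarith [Stirling.le_log_factorial_stirling hk]

theorem log_factorial_le (k : ℕ) : log k ! ≤ k * log k - k + (1 + log (k + 1)) := by
  rcases k with - | m
  · simp
  have stirlingSeq_le : log (Stirling.stirlingSeq (m + 1)) ≤ log (Stirling.stirlingSeq 1) :=
    Stirling.log_stirlingSeq'_antitone m.zero_le
  have log_stirlingSeq : log (Stirling.stirlingSeq (m + 1)) =
      log (m + 1)! - 1 / 2 * (log 2 + log (m + 1 : ℕ)) -
        (m + 1 : ℕ) * (log (m + 1 : ℕ) - 1) := by
    rw [Stirling.log_stirlingSeq_formula, log_mul, log_div, log_exp] <;> positivity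
  have log_stirlingSeq_one : log (Stirling.stirlingSeq 1) = 1 - 1 / 2 * log 2 := by
    rw [Stirling.stirlingSeq_one, log_div, log_exp, log_sqrt] <;> first | positivity | ring
  have log_nonneg : 0 ≤ log (m + 1 : ℕ) := log_natCast_nonneg _
  have log_mono : log (m + 1 : ℕ) ≤ log ((m + 1 : ℕ) + 1) := by gcongr; linarith
  linarith

end LogFactorial

section EmpiricalDistribution

open Finset

variable {X Y : Type*} [DecidableEq X] [DecidableEq Y] [Fintype X] [Fintype Y] {n : ℕ}

theorem natCast_mul_empDist (x : Fin n → X) (a : X) :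
    n * empDist x a = #{i | x i = a} := by
  refine mul_div_cancel_of_imp' fun hn => ?_
  obtain rfl : n = 0 := mod_cast hn
  simp

theorem isProbDist_empDist (hn : n ≠ 0) (x : Fin n → X) : IsProbDist (empDist x) := by
  refine ⟨fun a => by unfold empDist; positivity, ?_⟩
  simp only [empDist, ← sum_div]
  rw [← Nat.cast_sum, ← card_eq_sum_card_fiberwise fun _ _ => mem_coe.2 (mem_univ _)]
  simp [hn]

theorem sum_comp_div_eq_sum_empDist_mul (x : Fin n → X) (c : X → ℝ) :
    1 / n * ∑ i, c (x i) = ∑ a, empDist x a * c a := by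
  rw [← sum_fiberwise' univ x c, mul_sum]
  simp only [sum_const, nsmul_eq_mul, empDist]
  exact sum_congr rfl fun a _ => by ring

theorem empDist_fst_comp (F : Fin n → X × Y) (a : X) :
    empDist (Prod.fst ∘ F) a = ∑ b, empDist F (a, b) := by
  simp only [empDist, ← sum_div, ← Nat.cast_sum]
  rw [card_eq_sum_card_fiberwise (f := Prod.snd ∘ F) (t := univ) fun _ _ => mem_coe.2 (mem_univ _)]
  simp only [filter_filter, Function.comp_apply, Prod.ext_iff]

theorem empDist_snd_comp (F : Fin n → X × Y) (b : Y) :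
    empDist (Prod.snd ∘ F) b = ∑ a, empDist F (a, b) := by
  simp only [empDist, ← sum_div, ← Nat.cast_sum]
  rw [card_eq_sum_card_fiberwise (f := Prod.fst ∘ F) (t := univ) fun _ _ => mem_coe.2 (mem_univ _)]
  simp only [filter_filter, Function.comp_apply, Prod.ext_iff, and_comm]

theorem exists_empDist_eq_div {N : X → ℕ} (hN : ∑ a, N a = n) :
    ∃ f : Fin n → X, ∀ a, empDist f a = N a / n := by
  have e : Fin n ≃ Σ a, Fin (N a) := Fintype.equivOfCardEq (by simp [hN])
  refine ⟨fun i => (e i).1, fun a => ?_⟩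
  have fiber_equiv : {i // (e i).1 = a} ≃ Fin (N a) :=
    (e.subtypeEquiv fun _ => Iff.rfl).trans (Equiv.sigmaSubtype a)
  rw [empDist, ← Fintype.card_subtype, Fintype.card_congr fiber_equiv, Fintype.card_fin]

end EmpiricalDistribution

section Entropy

open Finset Real

variable {ι X Y : Type*} [Fintype ι] [Fintype X] [Fintype Y]

/-- The Shannon entropy, in nats, of a distribution on a finite alphabet. -/
noncomputable def shannonEntropy (p : ι → ℝ) : ℝ :=
  ∑ i, negMulLog (p i)

/-- The mutual information `I(X;Y) = H(X) + H(Y) - H(X,Y)` of a pair of letters, as a function of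
their joint law `p`. In contrast to `mutualInfo`, it does not refer to a channel, so that it applies
to joint types and its continuity is that of the entropy. -/
noncomputable def jointInfo (p : X × Y → ℝ) : ℝ :=
  shannonEntropy (fun x => ∑ y, p (x, y)) + shannonEntropy (fun y => ∑ x, p (x, y)) -
    shannonEntropy p

/-- The joint law of an input with distribution `Q` and the output of the channel `W`. -/
def jointLaw (Q : X → ℝ) (W : X → Y → ℝ) (z : X × Y) : ℝ :=
  Q z.1 * W z.1 z.2

omit [Fintype X] in
theorem sum_jointLaw_snd {W : X → Y → ℝ} (hW : ∀ x, IsProbDist (W x)) (Q : X → ℝ) (x : X) :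
    ∑ y, jointLaw Q W (x, y) = Q x := by
  simp only [jointLaw, ← mul_sum, (hW x).2, mul_one]

theorem isProbDist_jointLaw {Q : X → ℝ} {W : X → Y → ℝ} (hQ : IsProbDist Q)
    (hW : ∀ x, IsProbDist (W x)) : IsProbDist (jointLaw Q W) := by
  refine ⟨fun z => mul_nonneg (hQ.1 z.1) ((hW z.1).1 z.2), ?_⟩
  rw [Fintype.sum_prod_type, ← hQ.2]
  exact sum_congr rfl fun x _ => sum_jointLaw_snd hW Q x

omit [Fintype Y] in
theorem mul_mul_log_div_sum {Q : X → ℝ} {W : X → Y → ℝ} (hQ : ∀ x, 0 ≤ Q x)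
    (hW : ∀ x y, 0 ≤ W x y) (x : X) (y : Y) :
    Q x * W x y * log (W x y / ∑ x', Q x' * W x' y) =
      negMulLog (Q x) * W x y - Q x * W x y * log (∑ x', Q x' * W x' y) -
        negMulLog (Q x * W x y) := by
  rcases eq_or_ne (Q x) 0 with hQx | hQx
  · simp [hQx]
  rcases eq_or_ne (W x y) 0 with hWxy | hWxy
  · simp [hWxy]
  have output_pos : 0 < ∑ x', Q x' * W x' y :=
    sum_pos' (fun x' _ => mul_nonneg (hQ x') (hW x' y))
      ⟨x, mem_univ x, mul_pos ((hQ x).lt_of_ne' hQx) ((hW x y).lt_of_ne' hWxy)⟩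
  rw [log_div hWxy output_pos.ne', negMulLog, negMulLog, log_mul hQx hWxy]
  ring

theorem mutualInfo_eq_jointInfo {Q : X → ℝ} {W : X → Y → ℝ} (hQ : ∀ x, 0 ≤ Q x)
    (hW : ∀ x, IsProbDist (W x)) : mutualInfo Q W = jointInfo (jointLaw Q W) := by
  have input : ∑ x, ∑ y, negMulLog (Q x) * W x y =
      shannonEntropy fun x => ∑ y, jointLaw Q W (x, y) := by
    simp only [sum_jointLaw_snd hW, shannonEntropy, ← mul_sum, (hW _).2, mul_one]
  have output : ∑ x, ∑ y, Q x * W x y * log (∑ x', Q x' * W x' y) =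
      -shannonEntropy fun y => ∑ x, jointLaw Q W (x, y) := by
    rw [sum_comm, shannonEntropy, ← sum_neg_distrib]
    refine sum_congr rfl fun y _ => ?_
    rw [← sum_mul, negMulLog, neg_mul, neg_neg]
    rfl
  have joint : ∑ x, ∑ y, negMulLog (Q x * W x y) = shannonEntropy (jointLaw Q W) :=
    (Fintype.sum_prod_type fun z => negMulLog (jointLaw Q W z)).symm
  simp only [mutualInfo, mul_mul_log_div_sum hQ fun x => (hW x).1, sum_sub_distrib]
  rw [input, output, joint, jointInfo, sub_neg_eq_add]

theorem continuous_shannonEntropy : Continuous (shannonEntropy : (ι → ℝ) → ℝ) :=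
  continuous_finsetSum _ fun i _ => continuous_negMulLog.comp (continuous_apply i)

theorem uniformContinuousOn_jointInfo :
    UniformContinuousOn (jointInfo : (X × Y → ℝ) → ℝ) {p | IsProbDist p} := by
  refine IsCompact.uniformContinuousOn_of_continuous (isCompact_stdSimplex ℝ (X × Y))
    (Continuous.continuousOn ?_)
  refine ((continuous_shannonEntropy.comp ?_).add (continuous_shannonEntropy.comp ?_)).sub
    continuous_shannonEntropy <;> fun_prop

end Entropy

section TypeClass

open Finset MulAction Real
open scoped Nat

/-- The type class of `f`: all rearrangements `f ∘ τ` by a permutation `τ` of the index set. For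
sequences it is the set `T_Q^n` of sequences of the same type as `f`. -/
abbrev typeClass {ι X : Type*} (f : ι → X) : Set (ι → X) := orbit (Equiv.Perm ι)ᵈᵐᵃ f

variable {ι X Y : Type*} {n : ℕ}

theorem ncard_orbit_fst_snd_comp (F : ι → X × Y) :
    (orbit (Equiv.Perm ι)ᵈᵐᵃ (Prod.fst ∘ F, Prod.snd ∘ F)).ncard = (typeClass F).ncard := by
  rw [← Set.ncard_image_of_injective _
    (Equiv.arrowProdEquivProdArrow ι (fun _ => X) (fun _ => Y)).injective]
  congr 1
  exact Set.range_comp (Equiv.arrowProdEquivProdArrow ι (fun _ => X) fun _ => Y)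
    fun τ : (Equiv.Perm ι)ᵈᵐᵃ => τ • F

theorem natCard_domMulAct_perm (ι : Type*) [Finite ι] :
    Nat.card (Equiv.Perm ι)ᵈᵐᵃ = (Nat.card ι)! := by
  rw [Nat.card_congr DomMulAct.mk.symm, Nat.card_perm]

theorem ncard_typeClass_le_factorial [Finite ι] (f : ι → X) :
    (typeClass f).ncard ≤ (Nat.card ι)! := by
  rw [← index_stabilizer, ← natCard_domMulAct_perm]
  exact Nat.le_of_dvd (natCard_domMulAct_perm ι ▸ Nat.factorial_pos _)
    (Subgroup.index_dvd_card _)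

theorem log_log_ncard_typeClass_add_one_le [Finite X] (f : Fin n → X) :
    log (log (typeClass f).ncard + 1) ≤ 2 * (1 + log (n + 1)) := by
  have ncard_le : ((typeClass f).ncard : ℝ) ≤ n ^ n := by
    have h := (ncard_typeClass_le_factorial f).trans (Nat.factorial_le_pow _)
    rw [Nat.card_fin] at h
    exact mod_cast h
  have log_ncard_le : log (typeClass f).ncard ≤ n * n :=
    calc log (typeClass f).ncard ≤ log (n ^ n) :=
          log_le_log (mod_cast ncard_orbit_pos f) ncard_le
      _ = n * log n := log_pow n _
      _ ≤ n * n := by gcongr; exact log_le_self n.cast_nonneg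
  calc log (log (typeClass f).ncard + 1) ≤ log ((n + 1) ^ 2) := by
        gcongr
        nlinarith
    _ = 2 * log (n + 1) := by rw [log_pow, Nat.cast_two]
    _ ≤ 2 * (1 + log (n + 1)) := by linarith

variable [DecidableEq X] [Fintype X]

theorem meanDist_of_mem_orbit [DecidableEq Y] [Fintype Y] {F : Fin n → X × Y} {x : Fin n → X}
    {y : Fin n → Y}
    (hxy : (x, y) ∈ orbit (Equiv.Perm (Fin n))ᵈᵐᵃ (Prod.fst ∘ F, Prod.snd ∘ F))
    (d : X → Y → ℝ) : meanDist d x y = ∑ z, empDist F z * d z.1 z.2 := by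
  obtain ⟨τ, hτ⟩ := hxy
  obtain ⟨rfl, rfl⟩ := Prod.mk.inj hτ
  rw [← sum_comp_div_eq_sum_empDist_mul F fun z => d z.1 z.2,
    ← Equiv.sum_comp (DomMulAct.mk.symm τ) fun i => d (F i).1 (F i).2]
  rfl

theorem mem_typeClass_of_empDist_eq {x f : Fin n → X} (h : empDist x = empDist f) :
    x ∈ typeClass f := by
  have card_fiber_eq (a : X) : Fintype.card {i // x i = a} = Fintype.card {i // f i = a} := by
    have card_eq := congrArg (fun p : X → ℝ => n * p a) h
    simp only [natCast_mul_empDist] at card_eq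
    rw [Fintype.card_subtype, Fintype.card_subtype]
    exact mod_cast card_eq
  exact ⟨.mk (Equiv.ofFiberEquiv fun a => Fintype.equivOfCardEq (card_fiber_eq a)),
    funext fun i => Equiv.ofFiberEquiv_map _ i⟩

theorem ncard_typeClass_mul_prod_factorial [Fintype ι] (f : ι → X) :
    (typeClass f).ncard * ∏ a, (#{i | f i = a})! = (Nat.card ι)! := by
  classical
  have card_stabilizer : Nat.card (stabilizer (Equiv.Perm ι)ᵈᵐᵃ f) = ∏ a, (#{i | f i = a})! := by
    simp only [← Fintype.card_subtype]
    rw [← DomMulAct.stabilizer_card, ← Nat.card_eq_fintype_card]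
    exact Nat.card_congr (DomMulAct.mk.symm.subtypeEquiv fun _ => DomMulAct.mem_stabilizer_iff)
  rw [← card_stabilizer, ← natCard_domMulAct_perm, ← index_stabilizer, Subgroup.index_mul_card]

theorem log_ncard_typeClass (f : Fin n → X) :
    log (typeClass f).ncard = log n ! - ∑ a, log (#{i | f i = a})! := by
  have ncard_ne_zero : ((typeClass f).ncard : ℝ) ≠ 0 := mod_cast (ncard_orbit_pos f).ne'
  have ncard_mul := congrArg (fun k : ℕ => log k) (ncard_typeClass_mul_prod_factorial f)
  rw [eq_sub_iff_add_eq, ← log_prod fun a _ => by positivity,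
    ← log_mul ncard_ne_zero (by positivity)]
  simpa only [Nat.cast_mul, Nat.cast_prod, Nat.card_fin] using ncard_mul

theorem sum_card_fiber (f : Fin n → X) : ∑ a, (#{i | f i = a} : ℝ) = n := by
  rw [← Nat.cast_sum, ← card_eq_sum_card_fiberwise fun _ _ => mem_coe.2 (mem_univ _), card_univ,
    Fintype.card_fin]

theorem natCast_mul_negMulLog_div {k n : ℕ} (hkn : k ≤ n) :
    n * negMulLog (k / n) = k * log n - k * log k := by
  rcases eq_or_ne k 0 with rfl | hk
  · simp
  have hn : (n : ℝ) ≠ 0 := mod_cast (hk.bot_lt.trans_le hkn).ne'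
  rw [negMulLog, log_div (mod_cast hk) hn]
  field_simp
  ring

theorem sum_card_fiber_mul_log (f : Fin n → X) :
    ∑ a, #{i | f i = a} * log #{i | f i = a} = n * log n - n * shannonEntropy (empDist f) := by
  have card_fiber_le (a : X) : #{i | f i = a} ≤ n := (card_le_univ _).trans_eq (Fintype.card_fin n)
  simp only [shannonEntropy, empDist, mul_sum, natCast_mul_negMulLog_div (card_fiber_le _)]
  rw [sum_sub_distrib, ← sum_mul, sum_card_fiber, sub_sub_cancel]

theorem log_ncard_typeClass_le (f : Fin n → X) :
    log (typeClass f).ncard ≤ n * shannonEntropy (empDist f) + (1 + log (n + 1)) := by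
  have fibers := sum_le_sum fun a (_ : a ∈ univ) =>
    mul_log_sub_self_le_log_factorial #{i | f i = a}
  rw [sum_sub_distrib, sum_card_fiber_mul_log, sum_card_fiber] at fibers
  linarith [log_ncard_typeClass f, log_factorial_le n]

theorem le_log_ncard_typeClass (f : Fin n → X) :
    n * shannonEntropy (empDist f) - Fintype.card X * (1 + log (n + 1)) ≤
      log (typeClass f).ncard := by
  have fibers : ∑ a, log (#{i | f i = a})! ≤ ∑ a, (#{i | f i = a} * log #{i | f i = a} -
      #{i | f i = a} + (1 + log (n + 1))) := by
    refine sum_le_sum fun a _ => (log_factorial_le _).trans ?_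
    gcongr
    exact (card_le_univ _).trans_eq (Fintype.card_fin n)
  rw [sum_add_distrib, sum_sub_distrib, sum_card_fiber_mul_log, sum_card_fiber, sum_const,
    card_univ, nsmul_eq_mul] at fibers
  linarith [log_ncard_typeClass f, mul_log_sub_self_le_log_factorial n]

theorem exists_jointType_covering [DecidableEq Y] [Fintype Y] (F : Fin n → X × Y) :
    ∃ B : Finset (Fin n → Y),
      log B.card ≤ n * jointInfo (empDist F) +
        (Fintype.card (X × Y) + 4) * (1 + log (n + 1)) ∧
      ∀ x : Fin n → X, empDist x = empDist (Prod.fst ∘ F) →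
        ∃ y ∈ B, ∀ d : X → Y → ℝ, meanDist d x y = ∑ z, empDist F z * d z.1 z.2 := by
  obtain ⟨B, hB, hcov⟩ := exists_orbit_covering_log_card_le (G := (Equiv.Perm (Fin n))ᵈᵐᵃ)
    (Prod.fst ∘ F) (Prod.snd ∘ F)
  refine ⟨B, ?_, fun x hx => ?_⟩
  · rw [ncard_orbit_fst_snd_comp] at hB
    have fst_le := log_ncard_typeClass_le (Prod.fst ∘ F)
    have snd_le := log_ncard_typeClass_le (Prod.snd ∘ F)
    simp only [funext (empDist_fst_comp F)] at fst_le
    simp only [funext (empDist_snd_comp F)] at snd_le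
    unfold jointInfo
    linarith [le_log_ncard_typeClass F, log_log_ncard_typeClass_add_one_le (Prod.fst ∘ F)]
  · obtain ⟨y, hy, hxy⟩ := hcov x (mem_typeClass_of_empDist_eq hx)
    exact ⟨y, hy, meanDist_of_mem_orbit hxy⟩

end TypeClass

section JointTypeApproximation

open Finset

variable {X Y : Type*} [Fintype X] [Fintype Y]

theorem exists_nat_rounding {v : Y → ℝ} {k : ℕ} (hv : ∀ y, 0 ≤ v y) (hvk : ∑ y, v y = k)
    (y₀ : Y) :
    ∃ N : Y → ℕ, ∑ y, N y = k ∧ (∀ y ≠ y₀, N y ≤ v y) ∧ ∀ y, |N y - v y| ≤ Fintype.card Y := by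
  classical
  have floor_le (y : Y) : (⌊v y⌋₊ : ℝ) ≤ v y := Nat.floor_le (hv y)
  have lt_floor_add_one (y : Y) : v y < ⌊v y⌋₊ + 1 := Nat.lt_floor_add_one (v y)
  obtain ⟨r, hr⟩ : ∃ r, k = ∑ y, ⌊v y⌋₊ + r := by
    refine Nat.exists_eq_add_of_le (Nat.cast_le (α := ℝ).1 ?_)
    rw [Nat.cast_sum, ← hvk]
    exact sum_le_sum fun y _ => floor_le y
  have hr_le : (r : ℝ) ≤ Fintype.card Y := by
    have sum_fract_le : ∑ y, (v y - ⌊v y⌋₊) ≤ ∑ _y : Y, (1 : ℝ) :=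
      sum_le_sum fun y _ => by linarith [lt_floor_add_one y]
    rw [sum_sub_distrib, hvk, hr] at sum_fract_le
    simpa using sum_fract_le
  have one_le_card : (1 : ℝ) ≤ Fintype.card Y := mod_cast Fintype.card_pos_iff.2 ⟨y₀⟩
  refine ⟨fun y => ⌊v y⌋₊ + if y = y₀ then r else 0, ?_, fun y hy => ?_, fun y => ?_⟩
  · rw [sum_add_distrib, sum_ite_eq', if_pos (mem_univ _), hr]
  · simpa [hy] using floor_le y
  · rw [abs_le]
    push_cast
    split_ifs <;> constructor <;> linarith [floor_le y, lt_floor_add_one y, r.cast_nonneg (α := ℝ)]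

theorem sum_mul_le_sum_mul_of_forall_ne_le {N v c : Y → ℝ} {y₀ : Y} (hsum : ∑ y, N y = ∑ y, v y)
    (hN : ∀ y ≠ y₀, N y ≤ v y) (hc : ∀ y, c y₀ ≤ c y) : ∑ y, N y * c y ≤ ∑ y, v y * c y := by
  have excess_cost : ∑ y, (N y - v y) * (c y - c y₀) ≤ 0 := by
    refine sum_nonpos fun y _ => ?_
    rcases eq_or_ne y y₀ with rfl | hy
    · rw [sub_self, mul_zero]
    · exact mul_nonpos_of_nonpos_of_nonneg (sub_nonpos.2 (hN y hy)) (sub_nonneg.2 (hc y))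
  simp only [mul_sub, sub_mul, sum_sub_distrib, ← sum_mul, hsum, sub_self, sub_zero] at excess_cost
  exact sub_nonpos.1 excess_cost

-- Giving the mass lost by rounding down to the cheapest letter keeps the cost from increasing.
theorem exists_nat_rounding_sum_mul_le [Nonempty Y] {v : Y → ℝ} {k : ℕ} (hv : ∀ y, 0 ≤ v y)
    (hvk : ∑ y, v y = k) (c : Y → ℝ) :
    ∃ N : Y → ℕ, ∑ y, N y = k ∧ ∑ y, N y * c y ≤ ∑ y, v y * c y ∧
      ∀ y, |N y - v y| ≤ Fintype.card Y := by
  obtain ⟨y₀, hy₀⟩ := Finite.exists_min c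
  obtain ⟨N, hN_sum, hN_le, hN_near⟩ := exists_nat_rounding hv hvk y₀
  exact ⟨N, hN_sum,
    sum_mul_le_sum_mul_of_forall_ne_le (by rw [hvk, ← hN_sum, Nat.cast_sum]) hN_le hy₀, hN_near⟩

theorem IsProbDist.nonempty {p : X → ℝ} (hp : IsProbDist p) : Nonempty X := by
  by_contra hX
  rw [not_nonempty_iff] at hX
  simpa using hp.2

theorem exists_empDist_near_jointLaw [DecidableEq X] [DecidableEq Y] {n : ℕ} (hn : n ≠ 0)
    {Q : X → ℝ} (hQ : IsProbDist Q) (hQn : ∀ a, ∃ k : ℕ, Q a = k / n) {W : X → Y → ℝ}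
    (hW : ∀ x, IsProbDist (W x)) (d : X → Y → ℝ) :
    ∃ F : Fin n → X × Y, empDist (Prod.fst ∘ F) = Q ∧
      ∑ z, empDist F z * d z.1 z.2 ≤ ∑ x, ∑ y, Q x * W x y * d x y ∧
      dist (empDist F) (jointLaw Q W) ≤ Fintype.card Y / n := by
  choose k hk using hQn
  have hn0 : (0 : ℝ) < n := mod_cast hn.bot_lt
  have hk_sum : ∑ x, k x = n := by
    have h := hQ.2
    simp only [hk, ← sum_div] at h
    exact mod_cast (div_eq_one_iff_eq hn0.ne').1 h
  choose N hN_sum hN_cost hN_near using fun x =>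
    have := (hW x).nonempty
    exists_nat_rounding_sum_mul_le (v := fun y => k x * W x y) (k := k x)
      (fun y => mul_nonneg (k x).cast_nonneg ((hW x).1 y))
      (by rw [← mul_sum, (hW x).2, mul_one]) (d x)
  obtain ⟨F, hF⟩ := exists_empDist_eq_div (n := n) (N := fun z : X × Y => N z.1 z.2)
    (by simp only [Fintype.sum_prod_type, hN_sum, hk_sum])
  refine ⟨F, ?_, ?_, ?_⟩
  · ext x
    simp only [empDist_fst_comp, hF, ← sum_div, ← Nat.cast_sum, hN_sum, hk]
  · rw [Fintype.sum_prod_type]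
    refine sum_le_sum fun x _ => ?_
    calc ∑ y, empDist F (x, y) * d x y = (∑ y, N x y * d x y) / n := by
          simp only [hF, div_mul_eq_mul_div, sum_div]
      _ ≤ (∑ y, k x * W x y * d x y) / n := div_le_div_of_nonneg_right (hN_cost x) hn0.le
      _ = ∑ y, Q x * W x y * d x y := by simp only [hk, div_mul_eq_mul_div, sum_div]
  · refine (dist_pi_le_iff (by positivity)).2 fun z => ?_
    rw [Real.dist_eq, hF, jointLaw, hk, div_mul_eq_mul_div, ← sub_div, abs_div, abs_of_pos hn0]
    gcongr
    exact hN_near z.1 z.2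

end JointTypeApproximation

section TypeCovering

open Filter Finset Real
open scoped Topology

theorem exists_mutualInfo_lt_rateDistortion_add {X Y : Type*} [Fintype X] [Fintype Y]
    {d : X → Y → ℝ} {Q : X → ℝ} {D ε : ℝ} (hε : 0 < ε)
    (hD : ∃ W : X → Y → ℝ, (∀ x, IsProbDist (W x)) ∧ ∑ x, ∑ y, Q x * W x y * d x y ≤ D) :
    ∃ W : X → Y → ℝ, (∀ x, IsProbDist (W x)) ∧ ∑ x, ∑ y, Q x * W x y * d x y ≤ D ∧
      mutualInfo Q W < rateDistortion d D Q + ε := by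
  obtain ⟨W₀, hW₀, hW₀D⟩ := hD
  obtain ⟨_, ⟨W, hW, hW1, hWD, rfl⟩, hlt⟩ := Real.lt_sInf_add_pos
    (s := {r | ∃ W : X → Y → ℝ, (∀ x y, 0 ≤ W x y) ∧ (∀ x, ∑ y, W x y = 1) ∧
      (∑ x, ∑ y, Q x * W x y * d x y) ≤ D ∧ r = mutualInfo Q W})
    ⟨_, W₀, fun x => (hW₀ x).1, fun x => (hW₀ x).2, hW₀D, rfl⟩ hε
  exact ⟨W, fun x => ⟨hW x, hW1 x⟩, hWD, hlt⟩

theorem exists_channel_sum_eq_zero {X Y : Type*} [Fintype X] [Fintype Y] {d : X → Y → ℝ}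
    (hzero : ∀ x, ∃ y, d x y = 0) (Q : X → ℝ) :
    ∃ W : X → Y → ℝ, (∀ x, IsProbDist (W x)) ∧ ∑ x, ∑ y, Q x * W x y * d x y = 0 := by
  classical
  choose y₀ hy₀ using hzero
  exact ⟨fun x => Pi.single (y₀ x) 1, fun x => single_mem_stdSimplex ℝ (y₀ x), by
    simp [Pi.single_apply, hy₀]⟩

theorem tendsto_one_add_log_div_atTop :
    Tendsto (fun n : ℕ => (1 + log (n + 1)) / n) atTop (𝓝 0) := by
  have tendsto_cast : Tendsto (fun n : ℕ => (n : ℝ)) atTop atTop := tendsto_natCast_atTop_atTop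
  have one_isLittleO : (fun _ : ℕ => (1 : ℝ)) =o[atTop] fun n : ℕ => (n : ℝ) :=
    (Asymptotics.isLittleO_const_id_atTop 1).comp_tendsto tendsto_cast
  have log_isLittleO : (fun n : ℕ => log (n + 1)) =o[atTop] fun n : ℕ => (n : ℝ) :=
    (isLittleO_log_id_atTop.comp_tendsto
      (tendsto_atTop_add_const_right _ 1 tendsto_cast)).trans_isBigO
      ((Asymptotics.isBigO_refl _ _).add one_isLittleO.isBigO)
  exact (one_isLittleO.add log_isLittleO).tendsto_div_nhds_zero

theorem stmt9_general (X Y : Type*) [Fintype X] [Fintype Y] [DecidableEq X] {δ : ℝ} (hδ : 0 < δ) :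
    ∃ n₀ : ℕ, ∀ n ≥ n₀, ∀ (d : X → Y → ℝ) (Q : X → ℝ), IsProbDist Q →
      (∀ a, ∃ k : ℕ, Q a = (k : ℝ) / n) →
      ∀ D : ℝ,
        (∃ W : X → Y → ℝ, (∀ x, IsProbDist (W x)) ∧ ∑ x, ∑ y, Q x * W x y * d x y ≤ D) →
      ∃ B : Finset (Fin n → Y),
        (1 / (n : ℝ)) * Real.log (B.card : ℝ) ≤ rateDistortion d D Q + δ ∧
        ∀ x : Fin n → X, (∀ a, empDist x a = Q a) →
          ∃ y ∈ B, meanDist d x y ≤ D := by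
  classical
  have hδ3 : 0 < δ / 3 := by positivity
  obtain ⟨η, hη, info_near⟩ := Metric.uniformContinuousOn_iff.1
    (uniformContinuousOn_jointInfo (X := X) (Y := Y)) (δ / 3) hδ3
  have overhead := (tendsto_one_add_log_div_atTop.const_mul
    (Fintype.card (X × Y) + 4 : ℝ)).eventually_lt_const (u := δ / 3) (by simpa using hδ3)
  have rounding := (tendsto_const_div_atTop_nhds_zero_nat
    (Fintype.card Y : ℝ)).eventually_lt_const hη
  obtain ⟨n₀, hn₀⟩ := eventually_atTop.1
    (overhead.and (rounding.and (eventually_ne_atTop 0)))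
  refine ⟨n₀, fun n hn d Q hQ hQn D hD => ?_⟩
  obtain ⟨overhead_lt, rounding_lt, hn_ne⟩ := hn₀ n hn
  obtain ⟨W, hW, hWD, hWR⟩ := exists_mutualInfo_lt_rateDistortion_add hδ3 hD
  obtain ⟨F, hFQ, hFD, hFW⟩ := exists_empDist_near_jointLaw hn_ne hQ hQn hW d
  obtain ⟨B, hB, hcov⟩ := exists_jointType_covering F
  refine ⟨B, ?_, fun x hx => ?_⟩
  · have info_lt := (abs_lt.1 (info_near _ (isProbDist_empDist hn_ne F) _
      (isProbDist_jointLaw hQ hW) (hFW.trans_lt rounding_lt))).2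
    have hn0 : (0 : ℝ) < n := mod_cast hn_ne.bot_lt
    calc 1 / (n : ℝ) * log B.card
        ≤ jointInfo (empDist F) + (Fintype.card (X × Y) + 4) * ((1 + log (n + 1)) / n) := by
          rw [one_div_mul_eq_div, div_le_iff₀ hn0]
          exact hB.trans_eq (by field_simp)
      _ ≤ rateDistortion d D Q + δ := by
          rw [mutualInfo_eq_jointInfo hQ.1 hW] at hWR
          linarith
  · obtain ⟨y, hy, hxy⟩ := hcov x (hFQ ▸ funext hx)
    exact ⟨y, hy, (hxy d).trans_le (hFD.trans hWD)⟩

end TypeCovering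

theorem stmt9 {X Y : Type*} [Fintype X] [Fintype Y] [DecidableEq X]
    [Nonempty X] [Nonempty Y]
    (d : X → Y → ℝ) (hd : ∀ x y, 0 ≤ d x y)
    (hzero : ∀ x, ∃ y, d x y = 0)
    (δ : ℝ) (hδ : 0 < δ) :
    ∃ n₀ : ℕ, ∀ n ≥ n₀, ∀ Q : X → ℝ, IsProbDist Q →
      (∀ a, ∃ k : ℕ, Q a = (k : ℝ) / n) →
      ∀ D : ℝ, 0 ≤ D →
      ∃ B : Finset (Fin n → Y),
        (1 / (n : ℝ)) * Real.log (B.card : ℝ) ≤ rateDistortion d D Q + δ ∧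
        ∀ x : Fin n → X, (∀ a, empDist x a = Q a) →
          ∃ y ∈ B, meanDist d x y ≤ D := by
  obtain ⟨n₀, hn₀⟩ := stmt9_general X Y hδ
  exact ⟨n₀, fun n hn Q hQ hQn D hD => hn₀ n hn d Q hQ hQn D <|
    (exists_channel_sum_eq_zero hzero Q).imp fun W hW => ⟨hW.1, hW.2.trans_le hD⟩⟩
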